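/- arXiv:2411.11271 — 3 statements merged into one kernel-verified Lean document; each statement's English description precedes it below -/
import Mathlib

section
/- Let μ̂_n := (1/n)·Σ_{m=1}^n X_m denote the sample mean. Then for every δ ∈ (0,1) and every n ≥ 1, P( ‖μ̂_n − μ‖ ≤ 2·β·v^{1/p}·δ^{−1/p}·n^{−(p−1)/p} ) ≥ 1 − δ. -/
/-!
Interpolating the parallelogram inequality down to exponent `p` gives
`‖x + y‖ ^ p + ‖x - y‖ ^ p ≤ 2 ‖x‖ ^ p + 2 β ^ p ‖y‖ ^ p`. If `Y` has conditional mean zero given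
the past `S`, then `S` is the conditional expectation of `S - Y`, so Jensen's inequality yields
`E ‖S‖ ^ p ≤ E ‖S - Y‖ ^ p` and hence `E ‖S + Y‖ ^ p ≤ E ‖S‖ ^ p + 2 β ^ p E ‖Y‖ ^ p`. Summing along
the martingale `∑ (Xₘ - μ)` bounds its `p`-th moment by `2 β ^ p v n`, and Markov's inequality
for the `p`-th moment gives the concentration bound, even with `2 ^ (1 / p)` in place of `2`.
-/

open MeasureTheory

/-- `(p, β)`-smoothness of the norm of `E`: the parallelogram-type inequality expressing that `E`
is `p`-uniformly smooth with constant `β`. The exponent is real, and `β` is meant to be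
nonnegative. -/
def IsSmoothNorm (E : Type*) [NormedAddCommGroup E] (p β : ℝ) : Prop :=
  ∀ x y : E, ‖x + y‖ ^ p + ‖x - y‖ ^ p ≤ 2 * ‖x‖ ^ p + 2 * β ^ p * ‖y‖ ^ p

theorem IsSmoothNorm.mono_exponent {E : Type*} [NormedAddCommGroup E] {p q β : ℝ}
    (h : IsSmoothNorm E q β) (hβ : 0 ≤ β) (hp : 0 < p) (hpq : p ≤ q) : IsSmoothNorm E p β := by
  intro x y
  have hq : 0 < q := hp.trans_le hpq
  have hr0 : 0 ≤ p / q := by positivity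
  have hr1 : p / q ≤ 1 := (div_le_one hq).2 hpq
  have rpow_rpow_div {a : ℝ} (ha : 0 ≤ a) : (a ^ q) ^ (p / q) = a ^ p := by
    rw [← Real.rpow_mul ha, mul_div_cancel₀ _ hq.ne']
  have hconcave : 1 / 2 * ‖x + y‖ ^ p + 1 / 2 * ‖x - y‖ ^ p ≤
      (1 / 2 * ‖x + y‖ ^ q + 1 / 2 * ‖x - y‖ ^ q) ^ (p / q) := by
    have hadd : ‖x + y‖ ^ q ∈ Set.Ici 0 := Set.mem_Ici.2 (by positivity)
    have hsub : ‖x - y‖ ^ q ∈ Set.Ici 0 := Set.mem_Ici.2 (by positivity)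
    have hmid := (Real.concaveOn_rpow hr0 hr1).2 hadd hsub one_half_pos.le one_half_pos.le
      (add_halves 1)
    simpa only [smul_eq_mul, rpow_rpow_div (norm_nonneg _)] using hmid
  have hsmooth : 1 / 2 * ‖x + y‖ ^ q + 1 / 2 * ‖x - y‖ ^ q ≤ ‖x‖ ^ q + (β * ‖y‖) ^ q := by
    rw [Real.mul_rpow hβ (norm_nonneg y)]
    linarith [h x y]
  have hmean : 1 / 2 * ‖x + y‖ ^ p + 1 / 2 * ‖x - y‖ ^ p ≤ ‖x‖ ^ p + β ^ p * ‖y‖ ^ p :=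
    calc 1 / 2 * ‖x + y‖ ^ p + 1 / 2 * ‖x - y‖ ^ p
      _ ≤ (1 / 2 * ‖x + y‖ ^ q + 1 / 2 * ‖x - y‖ ^ q) ^ (p / q) := hconcave
      _ ≤ (‖x‖ ^ q + (β * ‖y‖) ^ q) ^ (p / q) := by gcongr
      _ ≤ (‖x‖ ^ q) ^ (p / q) + ((β * ‖y‖) ^ q) ^ (p / q) :=
        Real.rpow_add_le_add_rpow (by positivity) (by positivity) hr0 hr1
      _ = ‖x‖ ^ p + β ^ p * ‖y‖ ^ p := by
        rw [rpow_rpow_div (norm_nonneg x), rpow_rpow_div (by positivity),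
          Real.mul_rpow hβ (norm_nonneg y)]
  linarith

section Integrals

variable {E Ω : Type*} [NormedAddCommGroup E] {m mΩ : MeasurableSpace Ω} {P : Measure Ω} {p : ℝ}

theorem memLp_ofReal_iff_integrable_norm_rpow {f : Ω → E} (hf : AEStronglyMeasurable f P)
    (hp : 0 < p) : MemLp f (ENNReal.ofReal p) P ↔ Integrable (fun ω => ‖f ω‖ ^ p) P := by
  rw [← integrable_norm_rpow_iff hf (ENNReal.ofReal_pos.2 hp).ne' ENNReal.ofReal_ne_top,
    ENNReal.toReal_ofReal hp.le]

theorem integrable_norm_rpow_of_memLp_ofReal {f : Ω → E} (hf : MemLp f (ENNReal.ofReal p) P)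
    (hp : 0 < p) : Integrable (fun ω => ‖f ω‖ ^ p) P :=
  (memLp_ofReal_iff_integrable_norm_rpow hf.aestronglyMeasurable hp).1 hf

theorem integral_le_of_condExp_le [IsProbabilityMeasure P] (hm : m ≤ mΩ) {f : Ω → ℝ} {c : ℝ}
    (hf : ∀ᵐ ω ∂P, (P[f | m]) ω ≤ c) : ∫ ω, f ω ∂P ≤ c :=
  calc ∫ ω, f ω ∂P
    _ = ∫ ω, (P[f | m]) ω ∂P := (integral_condExp hm).symm
    _ ≤ ∫ _, c ∂P := integral_mono_ae integrable_condExp (integrable_const c) hf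
    _ = c := by simp

theorem one_sub_le_measure_norm_le_of_integral_rpow_le [IsProbabilityMeasure P] {f : Ω → E}
    (hp : 0 < p) (hf : Integrable (fun ω => ‖f ω‖ ^ p) P) {r δ : ℝ} (hr : 0 < r) (hδ : 0 ≤ δ)
    (h : ∫ ω, ‖f ω‖ ^ p ∂P ≤ δ * r ^ p) : ENNReal.ofReal (1 - δ) ≤ P {ω | ‖f ω‖ ≤ r} := by
  have hmarkov : r ^ p * P.real {ω | r ^ p ≤ ‖f ω‖ ^ p} ≤ r ^ p * δ :=
    (mul_meas_ge_le_integral_of_nonneg (ae_of_all _ fun ω => by positivity) hf _).trans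
      (by linarith)
  have htail : P {ω | r ^ p ≤ ‖f ω‖ ^ p} ≤ ENNReal.ofReal δ :=
    (ENNReal.le_ofReal_iff_toReal_le (measure_ne_top _ _) hδ).2
      (le_of_mul_le_mul_left hmarkov (by positivity))
  have hcompl : {ω | ‖f ω‖ ≤ r}ᶜ ⊆ {ω | r ^ p ≤ ‖f ω‖ ^ p} := fun ω hω =>
    Real.rpow_le_rpow hr.le (le_of_not_ge hω) hp.le
  rw [ENNReal.ofReal_sub _ hδ, ENNReal.ofReal_one, tsub_le_iff_right, ← measure_univ (μ := P)]
  calc P Set.univ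
    _ ≤ P {ω | ‖f ω‖ ≤ r} + P {ω | ‖f ω‖ ≤ r}ᶜ := measure_univ_le_add_compl _
    _ ≤ P {ω | ‖f ω‖ ≤ r} + ENNReal.ofReal δ := by
      gcongr
      exact (measure_mono hcompl).trans htail

end Integrals

section MartingaleMoments

variable {E Ω : Type*} [NormedAddCommGroup E] [NormedSpace ℝ E] [CompleteSpace E]
  {m mΩ : MeasurableSpace Ω} {P : Measure Ω} [IsFiniteMeasure P] {p β : ℝ}

theorem integral_norm_rpow_le_integral_norm_sub_rpow_of_condExp_eq_zero (hm : m ≤ mΩ)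
    (hp : 1 ≤ p) {S Y : Ω → E} (hS : StronglyMeasurable[m] S)
    (hSp : MemLp S (ENNReal.ofReal p) P) (hYp : MemLp Y (ENNReal.ofReal p) P)
    (hY : P[Y | m] =ᵐ[P] 0) :
    ∫ ω, ‖S ω‖ ^ p ∂P ≤ ∫ ω, ‖S ω - Y ω‖ ^ p ∂P := by
  have hp' : 1 ≤ ENNReal.ofReal p := ENNReal.one_le_ofReal.2 hp
  have hcond : P[S - Y | m] =ᵐ[P] S := by
    have hsub := condExp_sub (hSp.integrable hp') (hYp.integrable hp') m
    rw [condExp_of_stronglyMeasurable hm hS (hSp.integrable hp')] at hsub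
    filter_upwards [hsub, hY] with ω hω hYω
    simp [hω, hYω]
  calc ∫ ω, ‖S ω‖ ^ p ∂P
    _ = ∫ ω, ‖(P[S - Y | m]) ω‖ ^ p ∂P :=
      integral_congr_ae (hcond.mono fun ω hω => by simp only [hω])
    _ ≤ ∫ ω, ‖S ω - Y ω‖ ^ p ∂P :=
      integral_norm_condExp_rpow_le hp
        (integrable_norm_rpow_of_memLp_ofReal (hSp.sub hYp) (by linarith))

theorem IsSmoothNorm.integral_norm_add_rpow_le (h : IsSmoothNorm E p β) (hm : m ≤ mΩ)
    (hp : 1 ≤ p) {S Y : Ω → E} (hS : StronglyMeasurable[m] S)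
    (hSp : MemLp S (ENNReal.ofReal p) P) (hYp : MemLp Y (ENNReal.ofReal p) P)
    (hY : P[Y | m] =ᵐ[P] 0) :
    ∫ ω, ‖S ω + Y ω‖ ^ p ∂P ≤ ∫ ω, ‖S ω‖ ^ p ∂P + 2 * β ^ p * ∫ ω, ‖Y ω‖ ^ p ∂P := by
  have integrable_rpow {f : Ω → E} (hf : MemLp f (ENNReal.ofReal p) P) :=
    integrable_norm_rpow_of_memLp_ofReal hf (zero_lt_one.trans_le hp)
  have hadd : Integrable (fun ω => ‖S ω + Y ω‖ ^ p) P := integrable_rpow (hSp.add hYp)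
  have hsub : Integrable (fun ω => ‖S ω - Y ω‖ ^ p) P := integrable_rpow (hSp.sub hYp)
  have hS2 := (integrable_rpow hSp).const_mul 2
  have hY2 := (integrable_rpow hYp).const_mul (2 * β ^ p)
  have hsmooth : ∫ ω, ‖S ω + Y ω‖ ^ p ∂P + ∫ ω, ‖S ω - Y ω‖ ^ p ∂P ≤
      2 * ∫ ω, ‖S ω‖ ^ p ∂P + 2 * β ^ p * ∫ ω, ‖Y ω‖ ^ p ∂P := by
    rw [← integral_add hadd hsub, ← integral_const_mul, ← integral_const_mul,
      ← integral_add hS2 hY2]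
    exact integral_mono (hadd.add hsub) (hS2.add hY2) fun ω => h (S ω) (Y ω)
  have hjensen :=
    integral_norm_rpow_le_integral_norm_sub_rpow_of_condExp_eq_zero hm hp hS hSp hYp hY
  linarith

theorem condExp_sub_const_ae_eq_zero (hm : m ≤ mΩ) {f : Ω → E} {c : E} (hf : Integrable f P)
    (hfc : P[f | m] =ᵐ[P] fun _ => c) : P[fun ω => f ω - c | m] =ᵐ[P] 0 := by
  have hsub := condExp_sub hf (integrable_const c) m
  rw [condExp_const hm] at hsub
  exact hsub.trans (hfc.mono fun ω hω => by simp [hω])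

variable {ℱ : Filtration ℕ mΩ} {D : ℕ → Ω → E}

theorem IsSmoothNorm.integral_norm_sum_rpow_le (h : IsSmoothNorm E p β) (hp : 1 ≤ p)
    (hD : ∀ k, StronglyMeasurable[ℱ (k + 1)] (D k))
    (hDp : ∀ k, MemLp (D k) (ENNReal.ofReal p) P) (hD0 : ∀ k, P[D k | ℱ k] =ᵐ[P] 0) (n : ℕ) :
    ∫ ω, ‖∑ k ∈ Finset.range n, D k ω‖ ^ p ∂P ≤
      2 * β ^ p * ∑ k ∈ Finset.range n, ∫ ω, ‖D k ω‖ ^ p ∂P := by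
  induction n with
  | zero => simp [Real.zero_rpow (zero_lt_one.trans_le hp).ne']
  | succ n ih =>
    have hmeas : StronglyMeasurable[ℱ n] fun ω => ∑ k ∈ Finset.range n, D k ω :=
      Finset.stronglyMeasurable_fun_sum _ fun k hk =>
        (hD k).mono (ℱ.mono (Finset.mem_range.1 hk))
    have hstep := h.integral_norm_add_rpow_le (ℱ.le n) hp hmeas
      (memLp_finsetSum _ fun k _ => hDp k) (hDp n) (hD0 n)
    simp only [Finset.sum_range_succ]
    linarith

theorem IsSmoothNorm.integral_norm_average_rpow_le (h : IsSmoothNorm E p β) (hβ : 0 ≤ β)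
    (hp : 1 ≤ p) (hD : ∀ k, StronglyMeasurable[ℱ (k + 1)] (D k))
    (hDp : ∀ k, MemLp (D k) (ENNReal.ofReal p) P) (hD0 : ∀ k, P[D k | ℱ k] =ᵐ[P] 0) {v : ℝ}
    (hv : ∀ k, ∫ ω, ‖D k ω‖ ^ p ∂P ≤ v) {n : ℕ} (hn : n ≠ 0) :
    ∫ ω, ‖(n : ℝ)⁻¹ • ∑ k ∈ Finset.range n, D k ω‖ ^ p ∂P ≤
      2 * β ^ p * v / (n : ℝ) ^ (p - 1) := by
  have hn0 : (0 : ℝ) < n := by positivity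
  have hsum : ∑ k ∈ Finset.range n, ∫ ω, ‖D k ω‖ ^ p ∂P ≤ n * v := by
    simpa using Finset.sum_le_sum fun k (_ : k ∈ Finset.range n) => hv k
  calc ∫ ω, ‖(n : ℝ)⁻¹ • ∑ k ∈ Finset.range n, D k ω‖ ^ p ∂P
    _ = (n : ℝ)⁻¹ ^ p * ∫ ω, ‖∑ k ∈ Finset.range n, D k ω‖ ^ p ∂P := by
      rw [← integral_const_mul]
      congr with ω
      rw [norm_smul, Real.mul_rpow (norm_nonneg _) (norm_nonneg _),
        Real.norm_of_nonneg (by positivity)]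
    _ ≤ (n : ℝ)⁻¹ ^ p * (2 * β ^ p * (n * v)) := by
      gcongr
      exact (h.integral_norm_sum_rpow_le hp hD hDp hD0 n).trans (by gcongr)
    _ = 2 * β ^ p * v / (n : ℝ) ^ (p - 1) := by
      rw [Real.inv_rpow hn0.le, Real.rpow_sub_one hn0.ne']
      field_simp

end MartingaleMoments

theorem concentration_radius_rpow {p β v δ a : ℝ} (hp : p ≠ 0) (hβ : 0 ≤ β) (hv : 0 ≤ v)
    (hδ : 0 ≤ δ) (ha : 0 ≤ a) :
    (2 ^ (1 / p) * β * v ^ (1 / p) / (δ ^ (1 / p) * a ^ ((p - 1) / p))) ^ p =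
      2 * β ^ p * v / (δ * a ^ (p - 1)) := by
  have rpow_div_rpow {b : ℝ} (hb : 0 ≤ b) (s : ℝ) : (b ^ (s / p)) ^ p = b ^ s := by
    rw [← Real.rpow_mul hb, div_mul_cancel₀ _ hp]
  rw [Real.div_rpow (by positivity) (by positivity), Real.mul_rpow (by positivity) (by positivity),
    Real.mul_rpow (by positivity) hβ, Real.mul_rpow (by positivity) (by positivity)]
  simp only [rpow_div_rpow zero_le_two, rpow_div_rpow hv, rpow_div_rpow hδ, rpow_div_rpow ha,
    Real.rpow_one]

theorem stmt0_general {B : Type*} [NormedAddCommGroup B] [NormedSpace ℝ B] [CompleteSpace B]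
    {Ω : Type*} {mΩ : MeasurableSpace Ω} {P : Measure Ω} [IsProbabilityMeasure P]
    {p β v : ℝ} (hp : 1 ≤ p) (hβ : 0 < β) (hsmooth : IsSmoothNorm B p β) (hv : 0 < v)
    (ℱ : Filtration ℕ mΩ) (X : ℕ → Ω → B) (μ : B)
    (hadapted : ∀ n : ℕ, 1 ≤ n → StronglyMeasurable[ℱ n] (X n))
    (hmom : ∀ n : ℕ, 1 ≤ n → Integrable (fun ω => ‖X n ω‖ ^ p) P)
    (hcondmean : ∀ n : ℕ, P[X (n + 1) | ℱ n] =ᵐ[P] fun _ => μ)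
    (hcentral : ∀ n : ℕ, ∫ ω, ‖X (n + 1) ω - μ‖ ^ p ∂P ≤ v)
    {δ : ℝ} (hδ : 0 < δ) {n : ℕ} (hn : 1 ≤ n) :
    ENNReal.ofReal (1 - δ) ≤
      P {ω | ‖(n : ℝ)⁻¹ • (∑ m ∈ Finset.range n, X (m + 1) ω) - μ‖ ≤
          2 ^ (1 / p) * β * v ^ (1 / p) / (δ ^ (1 / p) * (n : ℝ) ^ ((p - 1) / p))} := by
  have hp0 : 0 < p := zero_lt_one.trans_le hp
  have hn0 : (0 : ℝ) < n := by exact_mod_cast hn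
  have hXp (k : ℕ) : MemLp (X (k + 1)) (ENNReal.ofReal p) P :=
    (memLp_ofReal_iff_integrable_norm_rpow
      ((hadapted _ k.succ_pos).mono (ℱ.le _)).aestronglyMeasurable hp0).2 (hmom _ k.succ_pos)
  have hDp (k : ℕ) : MemLp (fun ω => X (k + 1) ω - μ) (ENNReal.ofReal p) P :=
    (hXp k).sub (memLp_const μ)
  have hD0 (k : ℕ) : P[fun ω => X (k + 1) ω - μ | ℱ k] =ᵐ[P] 0 :=
    condExp_sub_const_ae_eq_zero (ℱ.le k)
      ((hXp k).integrable (ENNReal.one_le_ofReal.2 hp)) (hcondmean k)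
  have hcentered (ω : Ω) : (n : ℝ)⁻¹ • ∑ k ∈ Finset.range n, X (k + 1) ω - μ =
      (n : ℝ)⁻¹ • ∑ k ∈ Finset.range n, (X (k + 1) ω - μ) := by
    simp [Finset.sum_sub_distrib, smul_sub, ← Nat.cast_smul_eq_nsmul ℝ, hn0.ne']
  simp only [hcentered]
  refine one_sub_le_measure_norm_le_of_integral_rpow_le hp0
    (integrable_norm_rpow_of_memLp_ofReal
      ((memLp_finsetSum _ fun k _ => hDp k).const_smul _) hp0) (by positivity) hδ.le ?_
  calc ∫ ω, ‖(n : ℝ)⁻¹ • ∑ k ∈ Finset.range n, (X (k + 1) ω - μ)‖ ^ p ∂P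
    _ ≤ 2 * β ^ p * v / (n : ℝ) ^ (p - 1) :=
      hsmooth.integral_norm_average_rpow_le hβ.le hp
        (fun k => (hadapted _ k.succ_pos).sub stronglyMeasurable_const) hDp hD0 hcentral
        (Nat.one_le_iff_ne_zero.1 hn)
    _ = δ * (2 ^ (1 / p) * β * v ^ (1 / p) / (δ ^ (1 / p) * (n : ℝ) ^ ((p - 1) / p))) ^ p := by
      rw [concentration_radius_rpow hp0.ne' hβ.le hv.le hδ.le hn0.le]
      field_simp

/-- **Naive mean concentration in smooth Banach spaces.**
If `(Xₙ)ₙ≥1` are `𝔹`-valued random variables adapted to a filtration `ℱ`, with conditional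
mean `μ` and conditional centered `p`-th moment bounded by `v` (`p ∈ (1,2]`, `v > 0`), and
the norm of the separable Banach space `𝔹` is `(2,β)`-smooth, then for every `δ ∈ (0,1)`
and `n ≥ 1` the sample mean `μ̂ₙ = n⁻¹ ∑_{m=1}^n Xₘ` satisfies
`P(‖μ̂ₙ - μ‖ ≤ 2βv^{1/p} δ^{-1/p} n^{-(p-1)/p}) ≥ 1 - δ`. -/
theorem stmt0
    {B : Type*} [NormedAddCommGroup B] [NormedSpace ℝ B] [CompleteSpace B]
    [TopologicalSpace.SeparableSpace B]
    {Ω : Type*} {mΩ : MeasurableSpace Ω} {P : Measure Ω} [IsProbabilityMeasure P]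
    (β : ℝ) (hβ : 1 ≤ β)
    (hsmooth : ∀ x y : B, ‖x + y‖ ^ 2 + ‖x - y‖ ^ 2 ≤ 2 * ‖x‖ ^ 2 + 2 * β ^ 2 * ‖y‖ ^ 2)
    (ℱ : Filtration ℕ mΩ) (X : ℕ → Ω → B) (μ : B) (p v : ℝ)
    (hp1 : 1 < p) (hp2 : p ≤ 2) (hv : 0 < v)
    (hadapted : ∀ n : ℕ, 1 ≤ n → StronglyMeasurable[ℱ n] (X n))
    (hint : ∀ n : ℕ, 1 ≤ n → Integrable (X n) P)
    (hmom : ∀ n : ℕ, 1 ≤ n → Integrable (fun ω => ‖X n ω‖ ^ p) P)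
    (hcondmean : ∀ n : ℕ, P[X (n + 1) | ℱ n] =ᵐ[P] fun _ => μ)
    (hcondmom : ∀ n : ℕ, ∀ᵐ ω ∂P, (P[fun ω' => ‖X (n + 1) ω' - μ‖ ^ p | ℱ n]) ω ≤ v)
    (δ : ℝ) (hδ : δ ∈ Set.Ioo (0 : ℝ) 1) (n : ℕ) (hn : 1 ≤ n) :
    ENNReal.ofReal (1 - δ) ≤
      P {ω | ‖(n : ℝ)⁻¹ • (∑ m ∈ Finset.range n, X (m + 1) ω) - μ‖ ≤
          2 * β * v ^ (1 / p) / (δ ^ (1 / p) * (n : ℝ) ^ ((p - 1) / p))} := by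
  obtain ⟨hδ0, -⟩ := hδ
  have hsmooth_p : IsSmoothNorm B p β :=
    IsSmoothNorm.mono_exponent (q := 2) (fun x y => by simpa only [Real.rpow_two] using hsmooth x y)
      (by positivity) (by positivity) hp2
  have htwo : (2 : ℝ) ^ (1 / p) ≤ 2 :=
    Real.rpow_le_self_of_one_le one_le_two ((div_le_one (by positivity)).2 hp1.le)
  refine (stmt0_general hp1.le (by positivity) hsmooth_p hv ℱ X μ hadapted hmom hcondmean
    (fun k => integral_le_of_condExp_le (ℱ.le k) (hcondmom k)) hδ0 hn).trans
    (measure_mono (Set.ofPred_subset_ofPred.2 fun ω hω => hω.trans ?_))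
  gcongr
end

section
/- For every real k > 0 and every real t > 0, it holds that 1 − min(1, t)/t ≤ (t^k/(k+1))·(k/(k+1))^k. -/
/-!
Bernoulli's inequality says that `s ↦ s ^ p` lies above its tangent line at `s = 1`. For `p = k + 1`
and `s = t * (k / (k + 1))` it bounds `t - 1` by a multiple of `t ^ (k + 1)`, with equality at
`t = (k + 1) / k`. Dividing by `t` bounds `1 - 1 / t`, and the positive part of `1 - 1 / t` is
`1 - min 1 t / t`.
-/

theorem one_sub_min_one_div_self {K : Type*} [Field K] [LinearOrder K] [IsStrictOrderedRing K]
    {t : K} (ht : 0 < t) : 1 - min 1 t / t = max (1 - 1 / t) 0 := by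
  rw [← min_div_div_right ht.le, div_self ht.ne', ← max_sub_sub_left, sub_self]

theorem one_add_mul_sub_le_rpow {s p : ℝ} (hs : 0 ≤ s) (hp : 1 ≤ p) :
    1 + p * (s - 1) ≤ s ^ p := by
  simpa only [add_sub_cancel] using
    one_add_mul_self_le_rpow_one_add (show -1 ≤ s - 1 by linarith) hp

theorem sub_one_le_rpow_add_one_div_mul_rpow {k t : ℝ} (hk : 0 < k) (ht : 0 ≤ t) :
    t - 1 ≤ t ^ (k + 1) / (k + 1) * (k / (k + 1)) ^ k := by
  have hr : 0 < k / (k + 1) := by positivity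
  have bernoulli : 1 + (k + 1) * (t * (k / (k + 1)) - 1) ≤ (t * (k / (k + 1))) ^ (k + 1) :=
    one_add_mul_sub_le_rpow (by positivity) (by linarith)
  refine le_of_mul_le_mul_left ?_ hk
  calc k * (t - 1)
      = 1 + (k + 1) * (t * (k / (k + 1)) - 1) := by field_simp; ring
    _ ≤ (t * (k / (k + 1))) ^ (k + 1) := bernoulli
    _ = t ^ (k + 1) * ((k / (k + 1)) ^ k * (k / (k + 1))) := by
      rw [Real.mul_rpow ht hr.le, Real.rpow_add_one hr.ne' k]
    _ = k * (t ^ (k + 1) / (k + 1) * (k / (k + 1)) ^ k) := by ring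

theorem one_sub_one_div_le_rpow_div_mul_rpow {k t : ℝ} (hk : 0 < k) (ht : 0 < t) :
    1 - 1 / t ≤ t ^ k / (k + 1) * (k / (k + 1)) ^ k := by
  calc 1 - 1 / t
      = (t - 1) / t := by rw [sub_div, div_self ht.ne']
    _ ≤ t ^ (k + 1) / (k + 1) * (k / (k + 1)) ^ k / t := by
      gcongr
      exact sub_one_le_rpow_add_one_div_mul_rpow hk ht.le
    _ = t ^ k / (k + 1) * (k / (k + 1)) ^ k := by
      rw [Real.rpow_add_one ht.ne']
      field_simp

/-- For every real `k > 0` and every real `t > 0`,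
`1 - min 1 t / t ≤ (t ^ k / (k + 1)) * (k / (k + 1)) ^ k`,
where the powers are real (rpow) powers. -/
theorem stmt3 (k t : ℝ) (hk : 0 < k) (ht : 0 < t) :
    1 - min 1 t / t ≤ (t ^ k / (k + 1)) * (k / (k + 1)) ^ k := by
  rw [one_sub_min_one_div_self ht]
  exact max_le (one_sub_one_div_le_rpow_div_mul_rpow hk ht) (by positivity)
end

section
/- Let 𝒢 be a sub-σ-algebra of F, let X be a Bochner-integrable 𝔹-valued random variable with E‖X‖^p < ∞, E[X | 𝒢] = μ almost surely for a fixed μ ∈ 𝔹, and E[‖X − μ‖^p | 𝒢] ≤ v almost surely, where p ∈ (1,2] and v > 0. Let Z be a 𝒢-measurable 𝔹-valued random variable and let λ > 0. Then almost surely ‖μ − (E[Trunc(λ(X − Z))·(X − Z) | 𝒢] + Z)‖ ≤ K_p·2^{p−1}·λ^{p−1}·(v + ‖Z − μ‖^p). -/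
open MeasureTheory
open scoped Classical

/-- `truncB x = min(1, ‖x‖)/‖x‖` for `x ≠ 0`, and `truncB 0 = 1`; so `Trunc x • x` is the
projection of `x` onto the closed unit ball. -/
noncomputable def truncB {B : Type*} [NormedAddCommGroup B] (x : B) : ℝ :=
  if x = 0 then 1 else min 1 ‖x‖ / ‖x‖

/-- `K_p = (1/p) ((p-1)/p)^{p-1}`. -/
noncomputable def Kp (p : ℝ) : ℝ := (1 / p) * ((p - 1) / p) ^ (p - 1)

/-! Truncation at level `1` moves `x` by `max (‖x‖ - 1) 0`, and `K_p` is the least constant with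
`t - 1 ≤ K_p t ^ p` for all `t ≥ 0`; rescaling gives the pointwise bound
`‖Y - Trunc (λ Y) Y‖ ≤ K_p λ ^ (p - 1) ‖Y‖ ^ p`. For `Y = X - Z`, convexity of `t ^ p` bounds the
right-hand side by `C (‖X - μ‖ ^ p + ‖Z - μ‖ ^ p)` with `C = K_p 2 ^ (p - 1) λ ^ (p - 1)`, and it
remains to take conditional expectations. Since `Z` need not be integrable, everything is first
multiplied by the bounded positive `𝒢`-measurable weight `1 / (1 + ‖Z‖ + C ‖Z - μ‖ ^ p)`, which can
then be pulled out and cancelled. -/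

lemma Kp_nonneg {p : ℝ} (hp : 1 ≤ p) : 0 ≤ Kp p := by
  have hq : 0 ≤ (p - 1) / p := div_nonneg (sub_nonneg.2 hp) (zero_le_one.trans hp)
  exact mul_nonneg (one_div_nonneg.2 (zero_le_one.trans hp)) (Real.rpow_nonneg hq _)

lemma sub_one_le_Kp_mul_rpow {p t : ℝ} (hp : 1 ≤ p) (ht : 0 ≤ t) : t - 1 ≤ Kp p * t ^ p := by
  rcases hp.eq_or_lt with rfl | hp
  · simp [Kp]
  have hp_pos : 0 < p := zero_lt_one.trans hp
  set q := (p - 1) / p with hq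
  have hq_pos : 0 < q := div_pos (sub_pos.2 hp) hp_pos
  -- The line `t - 1` is tangent to `K_p t ^ p` where `q * t = 1`.
  have bernoulli : 1 + p * (q * t - 1) ≤ (q * t) ^ p := by
    simpa using one_add_mul_self_le_rpow_one_add (s := q * t - 1)
      (by linarith [mul_nonneg hq_pos.le ht]) hp.le
  refine le_of_mul_le_mul_left ?_ (sub_pos.2 hp)
  calc (p - 1) * (t - 1) = 1 + p * (q * t - 1) := by rw [hq]; field_simp; ring
    _ ≤ (q * t) ^ p := bernoulli
    _ = (p - 1) * (Kp p * t ^ p) := by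
      rw [Real.mul_rpow hq_pos.le ht, Kp, ← hq, Real.rpow_sub_one hq_pos.ne', hq]
      field_simp [(sub_pos.2 hp).ne']

lemma norm_inv_smul_le_one {B : Type*} [SeminormedAddCommGroup B] [NormedSpace ℝ B] {r : ℝ} {x : B}
    (h : ‖x‖ ≤ r) : ‖r⁻¹ • x‖ ≤ 1 := by
  have hr : 0 ≤ r := (norm_nonneg x).trans h
  rw [norm_smul, Real.norm_of_nonneg (inv_nonneg.2 hr)]
  exact inv_mul_le_one_of_le₀ h hr

section Truncation

variable {B : Type*} [NormedAddCommGroup B]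

lemma truncB_eq_inv_max (x : B) : truncB x = (max 1 ‖x‖)⁻¹ := by
  rcases eq_or_ne x 0 with rfl | hx
  · simp [truncB]
  have hx' : ‖x‖ ≠ 0 := norm_ne_zero_iff.2 hx
  rcases le_total 1 ‖x‖ with h | h <;> simp [truncB, hx, hx', h]

lemma continuous_truncB : Continuous (truncB : B → ℝ) := by
  simp_rw [funext truncB_eq_inv_max]
  exact Continuous.inv₀ (by fun_prop) fun x => by positivity

variable [NormedSpace ℝ B]

lemma norm_truncB_smul_le_one (x : B) : ‖truncB x • x‖ ≤ 1 := by
  rw [truncB_eq_inv_max]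
  exact norm_inv_smul_le_one (le_max_right _ _)

lemma norm_sub_truncB_smul (x : B) : ‖x - truncB x • x‖ = max (‖x‖ - 1) 0 := by
  rw [truncB_eq_inv_max]
  rcases le_total ‖x‖ 1 with h | h
  · simp [h]
  · have hx : ‖x‖ ≠ 0 := by positivity
    have hsmul : x - ‖x‖⁻¹ • x = (1 - ‖x‖⁻¹) • x := by rw [sub_smul, one_smul]
    rw [max_eq_right h, max_eq_left (sub_nonneg.2 h), hsmul, norm_smul,
      Real.norm_of_nonneg (sub_nonneg.2 (inv_le_one_of_one_le₀ h)), sub_mul, one_mul,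
      inv_mul_cancel₀ hx]

lemma norm_truncB_smul_smul_le_inv {lam : ℝ} (hlam : 0 < lam) (y : B) :
    ‖truncB (lam • y) • y‖ ≤ lam⁻¹ := by
  have h := norm_truncB_smul_le_one (lam • y)
  rw [smul_comm, norm_smul, Real.norm_of_nonneg hlam.le] at h
  rwa [← one_div, le_div_iff₀' hlam]

lemma norm_sub_truncB_smul_smul_le {lam p : ℝ} (hlam : 0 < lam) (hp : 1 ≤ p) (y : B) :
    ‖y - truncB (lam • y) • y‖ ≤ Kp p * lam ^ (p - 1) * ‖y‖ ^ p := by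
  refine le_of_mul_le_mul_left ?_ hlam
  calc lam * ‖y - truncB (lam • y) • y‖ = ‖lam • y - truncB (lam • y) • lam • y‖ := by
        rw [smul_comm _ lam, ← smul_sub, norm_smul, Real.norm_of_nonneg hlam.le]
    _ = max (‖lam • y‖ - 1) 0 := norm_sub_truncB_smul _
    _ ≤ Kp p * ‖lam • y‖ ^ p :=
        max_le (sub_one_le_Kp_mul_rpow hp (norm_nonneg _))
          (mul_nonneg (Kp_nonneg hp) (by positivity))
    _ = lam * (Kp p * lam ^ (p - 1) * ‖y‖ ^ p) := by
        rw [norm_smul, Real.norm_of_nonneg hlam.le, Real.mul_rpow hlam.le (norm_nonneg y),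
          Real.rpow_sub_one hlam.ne']
        field_simp

lemma integrable_truncB_smul_smul {Ω : Type*} [MeasurableSpace Ω] {P : Measure Ω}
    [IsFiniteMeasure P] {lam : ℝ} (hlam : 0 < lam) {Y : Ω → B} (hY : AEStronglyMeasurable Y P) :
    Integrable (fun ω => truncB (lam • Y ω) • Y ω) P :=
  .of_bound ((continuous_truncB.comp_aestronglyMeasurable (hY.const_smul lam)).smul hY) lam⁻¹
    (ae_of_all _ fun ω => norm_truncB_smul_smul_le_inv hlam (Y ω))

end Truncation

lemma norm_sub_rpow_le {B : Type*} [SeminormedAddCommGroup B] {p : ℝ} (hp : 1 ≤ p) (x y : B) :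
    ‖x - y‖ ^ p ≤ 2 ^ (p - 1) * (‖x‖ ^ p + ‖y‖ ^ p) :=
  calc ‖x - y‖ ^ p ≤ (‖x‖ + ‖y‖) ^ p := by gcongr; exact norm_sub_le x y
    _ ≤ 2 ^ (p - 1) * (‖x‖ ^ p + ‖y‖ ^ p) :=
        mod_cast NNReal.rpow_add_le_mul_rpow_add_rpow ‖x‖₊ ‖y‖₊ hp

section Measure

variable {B : Type*} [NormedAddCommGroup B] {Ω : Type*} {m mΩ : MeasurableSpace Ω} {P : Measure Ω}

lemma integrable_norm_sub_const_rpow [IsFiniteMeasure P] {p : ℝ} (hp : 0 < p) {X : Ω → B}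
    (hX : AEStronglyMeasurable X P) (hXp : Integrable (fun ω => ‖X ω‖ ^ p) P) (c : B) :
    Integrable (fun ω => ‖X ω - c‖ ^ p) P := by
  have hp0 : ENNReal.ofReal p ≠ 0 := by simpa using hp
  rw [← ENNReal.toReal_ofReal hp.le, integrable_norm_rpow_iff hX hp0 ENNReal.ofReal_ne_top] at hXp
  have hXc := (hXp.sub (memLp_const c)).integrable_norm_rpow hp0 ENNReal.ofReal_ne_top
  simpa only [ENNReal.toReal_ofReal hp.le, Pi.sub_apply] using hXc

variable [NormedSpace ℝ B] [CompleteSpace B] {f g : Ω → B} {h k : Ω → ℝ}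

lemma norm_condExp_sub_le_of_integrable (hm : m ≤ mΩ) [SigmaFinite (P.trim hm)]
    (hf : Integrable f P) (hg : StronglyMeasurable[m] g) (hg_int : Integrable g P)
    (hh : Integrable h P) (hk : StronglyMeasurable[m] k) (hk_int : Integrable k P)
    (hbound : ∀ᵐ ω ∂P, ‖f ω - g ω‖ ≤ h ω + k ω) :
    ∀ᵐ ω ∂P, ‖(P[f | m]) ω - g ω‖ ≤ (P[h | m]) ω + k ω := by
  filter_upwards [condExp_sub hf hg_int m, condExp_add hh hk_int m, norm_condExp_le (f - g),
    condExp_mono (m := m) (hf.sub hg_int).norm (hh.add hk_int) hbound]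
    with ω hsub hadd hnorm hmono
  rw [condExp_of_stronglyMeasurable hm hg hg_int, Pi.sub_apply] at hsub
  rw [condExp_of_stronglyMeasurable hm hk hk_int, Pi.add_apply] at hadd
  rw [← hsub, ← hadd]
  exact hnorm.trans hmono

lemma norm_condExp_sub_le (hm : m ≤ mΩ) [IsFiniteMeasure P]
    (hf : Integrable f P) (hg : StronglyMeasurable[m] g)
    (hh : Integrable h P) (hk : StronglyMeasurable[m] k)
    (hbound : ∀ᵐ ω ∂P, ‖f ω - g ω‖ ≤ h ω + k ω) :
    ∀ᵐ ω ∂P, ‖(P[f | m]) ω - g ω‖ ≤ (P[h | m]) ω + k ω := by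
  set w : Ω → ℝ := fun ω => (1 + ‖g ω‖ + ‖k ω‖)⁻¹
  have hw_pos (ω : Ω) : 0 < w ω := by positivity
  have cancel_weight (ω : Ω) (x : B) (a b : ℝ) :
      ‖w ω • x - w ω • g ω‖ ≤ w ω * a + w ω * b ↔ ‖x - g ω‖ ≤ a + b := by
    rw [← smul_sub, norm_smul, Real.norm_of_nonneg (hw_pos ω).le, ← mul_add,
      mul_le_mul_iff_right₀ (hw_pos ω)]
  have hw : StronglyMeasurable[m] w :=
    ((stronglyMeasurable_const.add hg.norm).add hk.norm).inv₀
  have hw_le (ω : Ω) : ‖w ω‖ ≤ 1 := by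
    rw [Real.norm_of_nonneg (hw_pos ω).le]
    exact inv_le_one_of_one_le₀ (by linarith [norm_nonneg (g ω), norm_nonneg (k ω)])
  have hwg_le (ω : Ω) : ‖(w • g) ω‖ ≤ 1 :=
    norm_inv_smul_le_one (by linarith [norm_nonneg (k ω)])
  have hwk_le (ω : Ω) : ‖(w • k) ω‖ ≤ 1 :=
    norm_inv_smul_le_one (by linarith [norm_nonneg (g ω)])
  have hw_aesm : AEStronglyMeasurable w P := (hw.mono hm).aestronglyMeasurable
  have hwf : Integrable (w • f) P := hf.bdd_smul 1 hw_aesm (ae_of_all _ hw_le)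
  have hwh : Integrable (w • h) P := hh.bdd_smul 1 hw_aesm (ae_of_all _ hw_le)
  have hwg : StronglyMeasurable[m] (w • g) := hw.smul hg
  have hwk : StronglyMeasurable[m] (w • k) := hw.smul hk
  have weighted := norm_condExp_sub_le_of_integrable hm hwf hwg
    (.of_bound (hwg.mono hm).aestronglyMeasurable 1 (ae_of_all _ hwg_le)) hwh hwk
    (.of_bound (hwk.mono hm).aestronglyMeasurable 1 (ae_of_all _ hwk_le))
    (hbound.mono fun ω hω => (cancel_weight ω _ _ _).2 hω)
  have pull_out_f := condExp_smul_of_aestronglyMeasurable_left hw.aestronglyMeasurable hwf hf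
  have pull_out_h := condExp_smul_of_aestronglyMeasurable_left hw.aestronglyMeasurable hwh hh
  filter_upwards [weighted, pull_out_f, pull_out_h] with ω hω hωf hωh
  rw [hωf, hωh] at hω
  exact (cancel_weight ω _ _ _).1 hω

theorem stmt4_general [IsFiniteMeasure P] (hm : m ≤ mΩ) {X M Z : Ω → B} {p lam : ℝ}
    (hp : 1 ≤ p) (hlam : 0 < lam) (hX : Integrable X P) (hM : StronglyMeasurable[m] M)
    (hmom : Integrable (fun ω => ‖X ω - M ω‖ ^ p) P) (hZ : StronglyMeasurable[m] Z) :
    ∀ᵐ ω ∂P,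
      ‖(P[X | m]) ω -
          ((P[fun ω' => truncB (lam • (X ω' - Z ω')) • (X ω' - Z ω') | m]) ω + Z ω)‖ ≤
        Kp p * 2 ^ (p - 1) * lam ^ (p - 1) *
          ((P[fun ω' => ‖X ω' - M ω'‖ ^ p | m]) ω + ‖Z ω - M ω‖ ^ p) := by
  set T : Ω → B := fun ω => truncB (lam • (X ω - Z ω)) • (X ω - Z ω)
  set C : ℝ := Kp p * 2 ^ (p - 1) * lam ^ (p - 1) with hC
  set D : Ω → ℝ := fun ω => ‖X ω - M ω‖ ^ p
  set k : Ω → ℝ := fun ω => C * ‖Z ω - M ω‖ ^ p with hk_def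
  have hK : 0 ≤ Kp p := Kp_nonneg hp
  have hT_int : Integrable T P := integrable_truncB_smul_smul hlam
    (hX.aestronglyMeasurable.sub (hZ.mono hm).aestronglyMeasurable)
  have hk : StronglyMeasurable[m] k :=
    ((Real.continuous_rpow_const (zero_le_one.trans hp)).comp_stronglyMeasurable
      (hZ.sub hM).norm).const_mul C
  have pointwise (ω : Ω) : ‖(X - T) ω - Z ω‖ ≤ (C • D) ω + k ω :=
    calc ‖X ω - T ω - Z ω‖ = ‖(X ω - Z ω) - T ω‖ := by rw [sub_right_comm]
      _ ≤ Kp p * lam ^ (p - 1) * ‖X ω - Z ω‖ ^ p := norm_sub_truncB_smul_smul_le hlam hp _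
      _ = Kp p * lam ^ (p - 1) * ‖(X ω - M ω) - (Z ω - M ω)‖ ^ p := by
        rw [sub_sub_sub_cancel_right]
      _ ≤ Kp p * lam ^ (p - 1) * (2 ^ (p - 1) * (‖X ω - M ω‖ ^ p + ‖Z ω - M ω‖ ^ p)) := by
        gcongr
        exact norm_sub_rpow_le hp _ _
      _ = C * ‖X ω - M ω‖ ^ p + C * ‖Z ω - M ω‖ ^ p := by rw [hC]; ring
  filter_upwards [norm_condExp_sub_le hm (hX.sub hT_int) hZ (hmom.smul C) hk
    (ae_of_all _ pointwise), condExp_sub hX hT_int m, condExp_smul C D m] with ω hω hsub hsmul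
  rw [hsub, hsmul] at hω
  simpa only [Pi.sub_apply, Pi.smul_apply, smul_eq_mul, sub_sub, hk_def, mul_add] using hω

end Measure

/-- **Truncation error bound.** If `E[X | 𝒢] = μ` a.s. and `E[‖X - μ‖^p | 𝒢] ≤ v` a.s. for
`p ∈ (1,2]`, `v > 0`, `Z` is `𝒢`-measurable and `λ > 0`, then almost surely
`‖μ - (E[Trunc(λ(X-Z))·(X-Z) | 𝒢] + Z)‖ ≤ K_p 2^{p-1} λ^{p-1} (v + ‖Z - μ‖^p)`. -/
theorem stmt4
    {B : Type*} [NormedAddCommGroup B] [NormedSpace ℝ B] [CompleteSpace B]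
    [TopologicalSpace.SeparableSpace B]
    {Ω : Type*} {mΩ : MeasurableSpace Ω} {P : Measure Ω} [IsProbabilityMeasure P]
    (𝒢 : MeasurableSpace Ω) (h𝒢 : 𝒢 ≤ mΩ)
    (X : Ω → B) (μ : B) (p v : ℝ) (hp1 : 1 < p) (hp2 : p ≤ 2) (hv : 0 < v)
    (hint : Integrable X P)
    (hmom : Integrable (fun ω => ‖X ω‖ ^ p) P)
    (hcondmean : P[X | 𝒢] =ᵐ[P] fun _ => μ)
    (hcondmom : ∀ᵐ ω ∂P, (P[fun ω' => ‖X ω' - μ‖ ^ p | 𝒢]) ω ≤ v)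
    (Z : Ω → B) (hZ : StronglyMeasurable[𝒢] Z)
    (lam : ℝ) (hlam : 0 < lam) :
    ∀ᵐ ω ∂P,
      ‖μ - ((P[fun ω' => truncB (lam • (X ω' - Z ω')) • (X ω' - Z ω') | 𝒢]) ω + Z ω)‖ ≤
        Kp p * 2 ^ (p - 1) * lam ^ (p - 1) * (v + ‖Z ω - μ‖ ^ p) := by
  have hK : 0 ≤ Kp p := Kp_nonneg hp1.le
  have hmom' : Integrable (fun ω => ‖X ω - μ‖ ^ p) P :=
    integrable_norm_sub_const_rpow (zero_lt_one.trans hp1) hint.aestronglyMeasurable hmom μ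
  filter_upwards [stmt4_general h𝒢 hp1.le hlam hint stronglyMeasurable_const hmom' hZ,
    hcondmean, hcondmom] with ω hω hmean hvar
  rw [hmean] at hω
  exact hω.trans (by gcongr)
end
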